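/- Let 1 ≤ p < q < ∞, d ≥ 1, 0 < ε < 1, 0 < δ < 1. With f(x) = |x|^{-d/q}·χ_{(0,1)}(|x|), g = χ_{(0,ε)}(|·|)f, h = χ_{(ε,1)}(|·|)f, and l = (1+δ)g + (1−δ)h, the quantity [(‖f‖+‖l‖)/‖f−l‖]·‖f/‖f‖ − l/‖l‖‖ (all norms the small Morrey norm) is at least (4+2δ)/(1+δ) · (1 − ε^{d−dp/q})^{1/p}. -/

import Mathlib

open MeasureTheory Metric ENNReal

/-- The small Morrey norm: sup over centers `a` and radii `R ∈ (0,1)` of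
`|B(a,R)|^(1/q-1/p) (∫_{B(a,R)} |f|^p)^(1/p)`, valued in `ℝ≥0∞`. -/
noncomputable def smallMorreyNorm (d : ℕ) (p q : ℝ)
    (f : EuclideanSpace ℝ (Fin d) → ℝ) : ℝ≥0∞ :=
  ⨆ (a : EuclideanSpace ℝ (Fin d)) (R : ℝ) (_ : 0 < R) (_ : R < 1),
    volume (ball a R) ^ (1 / q - 1 / p) *
      (∫⁻ y in ball a R, ENNReal.ofReal (|f y| ^ p)) ^ (1 / p)

/-- The (classical) Morrey norm: sup over all centers `a` and radii `R > 0`. -/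
noncomputable def morreyNorm (d : ℕ) (p q : ℝ)
    (f : EuclideanSpace ℝ (Fin d) → ℝ) : ℝ≥0∞ :=
  ⨆ (a : EuclideanSpace ℝ (Fin d)) (R : ℝ) (_ : 0 < R),
    volume (ball a R) ^ (1 / q - 1 / p) *
      (∫⁻ y in ball a R, ENNReal.ofReal (|f y| ^ p)) ^ (1 / p)


lemma morrey_mono (d : ℕ) (p q : ℝ) (hp : 1 ≤ p) (u v : EuclideanSpace ℝ (Fin d) → ℝ)
    (huv : ∀ᵐ x, |u x| ≤ |v x|) : smallMorreyNorm d p q u ≤ smallMorreyNorm d p q v := by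
  unfold smallMorreyNorm
  have hp0 : 0 ≤ p := by linarith
  refine iSup_mono fun a => iSup_mono fun R => iSup_mono fun hR => iSup_mono fun hR1 => ?_
  refine mul_le_mul_right (ENNReal.rpow_le_rpow ?_ (by positivity)) _
  apply lintegral_mono_ae
  filter_upwards [ae_restrict_of_ae huv] with x hx
  gcongr

lemma morrey_const (d : ℕ) (p q : ℝ) (hp : 1 ≤ p) (c : ℝ) (hc : 0 ≤ c)
    (u : EuclideanSpace ℝ (Fin d) → ℝ) :
    smallMorreyNorm d p q (fun x => c * u x) = ENNReal.ofReal c * smallMorreyNorm d p q u := by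
  unfold smallMorreyNorm
  have hp0 : 0 < p := by linarith
  simp only [ENNReal.mul_iSup]
  refine iSup_congr fun a => iSup_congr fun R => iSup_congr fun hR => iSup_congr fun hR1 => ?_
  have : ∀ y, ENNReal.ofReal (|c * u y| ^ p) = ENNReal.ofReal (c ^ p) * ENNReal.ofReal (|u y| ^ p) := by
    intro y
    rw [abs_mul, abs_of_nonneg hc, Real.mul_rpow hc (abs_nonneg _), ENNReal.ofReal_mul (by positivity)]
  simp only [this]
  rw [lintegral_const_mul' _ _ ENNReal.ofReal_ne_top, ENNReal.mul_rpow_of_nonneg _ _ (by positivity),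
    ENNReal.ofReal_rpow_of_nonneg (by positivity) (by positivity), ← Real.rpow_mul hc,
    mul_one_div_cancel hp0.ne', Real.rpow_one]
  ring

lemma morrey_le (d : ℕ) (p q : ℝ) (u : EuclideanSpace ℝ (Fin d) → ℝ)
    (a : EuclideanSpace ℝ (Fin d)) (R : ℝ) (h0 : 0 < R) (h1 : R < 1) :
    volume (ball a R) ^ (1 / q - 1 / p) *
      (∫⁻ y in ball a R, ENNReal.ofReal (|u y| ^ p)) ^ (1 / p) ≤ smallMorreyNorm d p q u := by
  unfold smallMorreyNorm
  exact le_iSup_of_le a (le_iSup_of_le R (le_iSup_of_le h0 (le_iSup_of_le h1 le_rfl)))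

lemma integral_scale (d : ℕ) (hd : 1 ≤ d) (s : ℝ) (hs : 0 < s) (hsd : s < d) :
    ∃ K : ℝ, 0 < K ∧ ∀ R : ℝ, 0 < R →
      ∫⁻ x in ball (0 : EuclideanSpace ℝ (Fin d)) R, ENNReal.ofReal (‖x‖ ^ (-s)) =
        ENNReal.ofReal (R ^ ((d : ℝ) - s) * K) := by
  have hfr : Module.finrank ℝ (EuclideanSpace ℝ (Fin d)) = d := by simp
  have hint : ∀ R : ℝ, IntegrableOn (fun x : EuclideanSpace ℝ (Fin d) => ‖x‖ ^ (-s)) (ball 0 R) := by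
    intro R
    refine integrableOn_ball_of_norm_le_rpow (C := 1) (α := s) (by rw [hfr]; exact hd) ?_ ?_ ?_
    · rw [hfr]; exact hsd
    · refine Filter.Eventually.of_forall fun x => ?_
      rw [one_mul, Real.norm_of_nonneg (by positivity)]
    · exact (measurable_norm.pow_const _).aestronglyMeasurable
  refine ⟨∫ x in ball (0 : EuclideanSpace ℝ (Fin d)) 1, ‖x‖ ^ (-s), ?_, ?_⟩
  · rw [setIntegral_pos_iff_support_of_nonneg_ae (Filter.Eventually.of_forall fun x => by
      simp only [Pi.zero_apply]; positivity) (hint 1)]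
    have : Nontrivial (EuclideanSpace ℝ (Fin d)) := by
      apply Module.nontrivial_of_finrank_pos (R := ℝ); omega
    have h1 : ball (0 : EuclideanSpace ℝ (Fin d)) 1 \ {0} ⊆
        (Function.support fun x : EuclideanSpace ℝ (Fin d) => ‖x‖ ^ (-s)) ∩ ball 0 1 := by
      rintro x ⟨hx, hx0⟩
      have : 0 < ‖x‖ := norm_pos_iff.2 hx0
      exact ⟨(Real.rpow_pos_of_pos this _).ne', hx⟩
    refine lt_of_lt_of_le ?_ (measure_mono h1)
    rw [measure_sdiff_null (by simp)]
    exact measure_ball_pos _ _ one_pos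
  · intro R hR
    rw [← ofReal_integral_eq_lintegral_ofReal (hint R) (Filter.Eventually.of_forall fun x => by
      simp only [Pi.zero_apply]; positivity)]
    congr 1
    have h := Measure.setIntegral_comp_smul_of_pos (volume : Measure (EuclideanSpace ℝ (Fin d)))
      (fun x : EuclideanSpace ℝ (Fin d) => ‖x‖ ^ (-s)) (ball 0 1) hR
    rw [smul_unitBall_of_pos hR, hfr] at h
    have h2 : ∀ x : EuclideanSpace ℝ (Fin d), ‖R • x‖ ^ (-s) = R ^ (-s) * ‖x‖ ^ (-s) := by
      intro x
      rw [norm_smul, Real.norm_of_nonneg hR.le, Real.mul_rpow hR.le (norm_nonneg _)]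
    simp only [h2, integral_const_mul, smul_eq_mul] at h
    rw [sub_eq_add_neg, Real.rpow_add hR, Real.rpow_natCast, mul_assoc, h]
    field_simp

lemma integral_center (d : ℕ) (hd : 1 ≤ d) (s : ℝ) (hs : 0 < s) (a : EuclideanSpace ℝ (Fin d)) (R : ℝ)
    (hR : 0 < R) :
    ∫⁻ x in ball a R, ENNReal.ofReal (‖x‖ ^ (-s)) ≤
      ∫⁻ x in ball (0 : EuclideanSpace ℝ (Fin d)) R, ENNReal.ofReal (‖x‖ ^ (-s)) := by
  set w : EuclideanSpace ℝ (Fin d) → ℝ≥0∞ := fun x => ENNReal.ofReal (‖x‖ ^ (-s)) with hw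
  have hA : MeasurableSet (ball a R) := measurableSet_ball
  have hB : MeasurableSet (ball (0 : EuclideanSpace ℝ (Fin d)) R) := measurableSet_ball
  rw [← lintegral_inter_add_sdiff w (ball a R) hB, ← lintegral_inter_add_sdiff w (ball 0 R) hA,
    Set.inter_comm]
  refine add_le_add_right ?_ _
  have hvol : volume (ball a R \ ball 0 R) = volume (ball 0 R \ ball a R) := by
    have e1 := measure_inter_add_sdiff (μ := volume) (ball a R) hB
    have e2 := measure_inter_add_sdiff (μ := volume) (ball 0 R) hA
    rw [Set.inter_comm, Measure.addHaar_ball_center, ← e2] at e1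
    refine (ENNReal.add_right_inj ?_).1 e1
    exact ((measure_mono Set.inter_subset_left).trans_lt measure_ball_lt_top).ne
  calc ∫⁻ x in ball a R \ ball 0 R, w x
      ≤ ∫⁻ x in ball a R \ ball 0 R, ENNReal.ofReal (R ^ (-s)) := by
        refine setLIntegral_mono' (hA.diff hB) fun x hx => ?_
        have : R ≤ ‖x‖ := by simpa using hx.2
        exact ENNReal.ofReal_le_ofReal (Real.rpow_le_rpow_of_nonpos hR this (by linarith))
    _ = ∫⁻ x in ball 0 R \ ball a R, ENNReal.ofReal (R ^ (-s)) := by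
        simp only [setLIntegral_const, hvol]
    _ ≤ ∫⁻ x in ball 0 R \ ball a R, w x := by
        refine lintegral_mono_ae ?_
        rw [ae_restrict_iff' (hB.diff hA)]
        have : Nontrivial (EuclideanSpace ℝ (Fin d)) := by
          apply Module.nontrivial_of_finrank_pos (R := ℝ); simp; omega
        have h0 : ∀ᵐ x : EuclideanSpace ℝ (Fin d), x ≠ 0 := by simp [ae_iff]
        filter_upwards [h0] with x hx0 hx
        have h1 : ‖x‖ < R := by simpa using hx.1
        exact ENNReal.ofReal_le_ofReal (Real.rpow_le_rpow_of_nonpos (norm_pos_iff.2 hx0) h1.le (by linarith))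

lemma morrey_val (d : ℕ) (p q K t : ℝ) (hp : 1 ≤ p) (hpq : p < q) (hK : 0 < K) (ht : 0 ≤ t)
    (a : EuclideanSpace ℝ (Fin d)) (R : ℝ) (hR : 0 < R) :
    volume (ball a R) ^ (1 / q - 1 / p) *
      (ENNReal.ofReal (R ^ ((d : ℝ) - d * p / q) * K * t)) ^ (1 / p) =
    ENNReal.ofReal (volume.real (ball (0 : EuclideanSpace ℝ (Fin d)) 1) ^ (1 / q - 1 / p)
      * K ^ (1 / p) * t ^ (1 / p)) := by
  have hp0 : 0 < p := by linarith
  have hq0 : 0 < q := by linarith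
  have hV : 0 < volume.real (ball (0 : EuclideanSpace ℝ (Fin d)) 1) := 
    ENNReal.toReal_pos (measure_ball_pos _ _ one_pos).ne' measure_ball_lt_top.ne
  rw [Measure.addHaar_ball_of_pos _ _ hR, ← ofReal_measureReal (measure_ball_lt_top.ne),
    ← ENNReal.ofReal_mul (by positivity), ENNReal.ofReal_rpow_of_pos (by positivity),
    ENNReal.ofReal_rpow_of_nonneg (by positivity) (by positivity),
    ← ENNReal.ofReal_mul (by positivity)]
  congr 1
  rw [finrank_euclideanSpace_fin, Real.mul_rpow (by positivity) hV.le, Real.mul_rpow (by positivity) ht,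
    Real.mul_rpow (by positivity) hK.le, ← Real.rpow_natCast, ← Real.rpow_mul hR.le,
    ← Real.rpow_mul hR.le]
  have : R ^ ((d : ℝ) * (1 / q - 1 / p)) * R ^ (((d : ℝ) - d * p / q) * (1 / p)) = 1 := by
    rw [← Real.rpow_add hR]
    have : (d : ℝ) * (1 / q - 1 / p) + ((d : ℝ) - d * p / q) * (1 / p) = 0 := by
      field_simp; ring
    rw [this, Real.rpow_zero]
  linear_combination (volume.real (ball (0 : EuclideanSpace ℝ (Fin d)) 1) ^ (1 / q - 1 / p)
      * K ^ (1 / p) * t ^ (1 / p)) * this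

/-- the Dunkl–Williams quotient of the pair `(f, l)` is at least
`(4+2δ)/(1+δ) · (1 - ε^{d-dp/q})^{1/p}`. -/
theorem dunklWilliams_pair_lower (d : ℕ) (p q : ℝ) (hp : 1 ≤ p) (hpq : p < q)
    (hd : 1 ≤ d) (ε δ : ℝ) (hε0 : 0 < ε) (hε1 : ε < 1) (hδ0 : 0 < δ) (hδ1 : δ < 1) :
    letI f : EuclideanSpace ℝ (Fin d) → ℝ :=
      fun x => if 0 < ‖x‖ ∧ ‖x‖ < 1 then ‖x‖ ^ (-(d : ℝ) / q) else 0
    letI g : EuclideanSpace ℝ (Fin d) → ℝ :=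
      fun x => if 0 < ‖x‖ ∧ ‖x‖ < ε then f x else 0
    letI h : EuclideanSpace ℝ (Fin d) → ℝ :=
      fun x => if ε < ‖x‖ ∧ ‖x‖ < 1 then f x else 0
    letI l : EuclideanSpace ℝ (Fin d) → ℝ :=
      fun x => (1 + δ) * g x + (1 - δ) * h x
    ENNReal.ofReal ((4 + 2 * δ) / (1 + δ) * (1 - ε ^ ((d : ℝ) - d * p / q)) ^ (1 / p)) ≤
      ((smallMorreyNorm d p q f + smallMorreyNorm d p q l) /
          smallMorreyNorm d p q (fun x => f x - l x)) *
        smallMorreyNorm d p q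
          (fun x => f x / (smallMorreyNorm d p q f).toReal -
            l x / (smallMorreyNorm d p q l).toReal) := by
  let f : EuclideanSpace ℝ (Fin d) → ℝ :=
    fun x => if 0 < ‖x‖ ∧ ‖x‖ < 1 then ‖x‖ ^ (-(d : ℝ) / q) else 0
  let g : EuclideanSpace ℝ (Fin d) → ℝ :=
    fun x => if 0 < ‖x‖ ∧ ‖x‖ < ε then f x else 0
  let h : EuclideanSpace ℝ (Fin d) → ℝ :=
    fun x => if ε < ‖x‖ ∧ ‖x‖ < 1 then f x else 0
  let l : EuclideanSpace ℝ (Fin d) → ℝ :=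
    fun x => (1 + δ) * g x + (1 - δ) * h x
  change ENNReal.ofReal ((4 + 2 * δ) / (1 + δ) * (1 - ε ^ ((d : ℝ) - d * p / q)) ^ (1 / p)) ≤
      ((smallMorreyNorm d p q f + smallMorreyNorm d p q l) /
          smallMorreyNorm d p q (fun x => f x - l x)) *
        smallMorreyNorm d p q
          (fun x => f x / (smallMorreyNorm d p q f).toReal -
            l x / (smallMorreyNorm d p q l).toReal)
  have hp0 : 0 < p := by linarith
  have hq0 : 0 < q := by linarith
  have hd0 : (0 : ℝ) < d := by exact_mod_cast hd
  have hs0 : 0 < (d : ℝ) * p / q := by positivity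
  have hsd : (d : ℝ) * p / q < d := by
    rw [div_lt_iff₀ hq0]; exact mul_lt_mul_of_pos_left hpq hd0
  have : Nontrivial (EuclideanSpace ℝ (Fin d)) := by
    apply Module.nontrivial_of_finrank_pos (R := ℝ); simp; omega
  obtain ⟨K, hK, hI⟩ := integral_scale d hd _ hs0 hsd
  set s : ℝ := (d : ℝ) * p / q with hs
  have hf0 : ∀ x, 0 ≤ f x := by
    intro x; simp only [f]; split_ifs <;> positivity
  have hfp : ∀ x, ‖x‖ < 1 → |f x| ^ p = ‖x‖ ^ (-s) := by
    intro x hx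
    rw [abs_of_nonneg (hf0 x)]
    rcases (norm_nonneg x).eq_or_lt with h0 | h0
    · simp only [f, ← h0, lt_irrefl, false_and, if_false]
      rw [Real.zero_rpow hp0.ne', Real.zero_rpow (by linarith)]
    · simp only [f, h0, hx, and_self, if_true]
      rw [← Real.rpow_mul h0.le]
      congr 1; rw [hs]; ring
  have hfp' : ∀ x, |f x| ^ p ≤ ‖x‖ ^ (-s) := by
    intro x
    by_cases hx : ‖x‖ < 1
    · exact (hfp x hx).le
    · simp only [f, hx, and_false, if_false, abs_zero]
      rw [Real.zero_rpow hp0.ne']; positivity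
  have hg : ∀ x, ‖x‖ < ε → g x = f x := by
    intro x hx
    by_cases h0 : 0 < ‖x‖
    · simp only [g, h0, hx, and_self, if_true]
    · simp only [g, f, h0, false_and, if_false]
  have hg' : ∀ x, ε ≤ ‖x‖ → g x = 0 := by
    intro x hx; simp [g, hx.not_gt]
  have hh : ∀ x, ε < ‖x‖ → h x = f x := by
    intro x hx
    by_cases h0 : ‖x‖ < 1
    · simp [h, h0, hx]
    · simp [h, f, h0]
  have hh' : ∀ x, ‖x‖ ≤ ε → h x = 0 := by
    intro x hx; simp [h, hx.not_gt]
  set V := volume.real (ball (0 : EuclideanSpace ℝ (Fin d)) 1) with hVdef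
  have hV : 0 < V := ENNReal.toReal_pos (measure_ball_pos _ _ one_pos).ne' measure_ball_lt_top.ne
  set C : ℝ := V ^ (1 / q - 1 / p) * K ^ (1 / p) with hC
  have hC0 : 0 < C := by positivity
  -- upper bound for f
  have hfle : smallMorreyNorm d p q f ≤ ENNReal.ofReal C := by
    have hv := fun a R hR => morrey_val d p q K 1 hp hpq hK zero_le_one a R hR
    simp only [mul_one, Real.one_rpow] at hv
    unfold smallMorreyNorm
    refine iSup_le fun a => iSup_le fun R => iSup_le fun h0 => iSup_le fun h1 => ?_
    rw [hC, ← hv a R h0, ← hs, ← hI R h0]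
    refine mul_le_mul_right (ENNReal.rpow_le_rpow ?_ (by positivity)) _
    refine le_trans ?_ (integral_center d hd s hs0 a R h0)
    exact lintegral_mono fun x => ENNReal.ofReal_le_ofReal (hfp' x)
  have hgge : ENNReal.ofReal C ≤ smallMorreyNorm d p q g := by
    have hv := fun a R hR => morrey_val d p q K 1 hp hpq hK zero_le_one a R hR
    simp only [mul_one, Real.one_rpow] at hv
    refine le_trans ?_ (morrey_le d p q g 0 ε hε0 hε1)
    rw [hC, ← hv 0 ε hε0, ← hs, ← hI ε hε0]
    refine mul_le_mul_right (ENNReal.rpow_le_rpow ?_ (by positivity)) _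
    refine le_of_eq (setLIntegral_congr_fun measurableSet_ball fun x hx => ?_)
    have hx' : ‖x‖ < ε := by simpa using hx
    rw [hg x hx', hfp x (hx'.trans hε1)]
  have hhR : ∀ R, ε < R → R < 1 → ENNReal.ofReal (C * (1 - (ε / R) ^ ((d : ℝ) - s)) ^ (1 / p)) ≤
      smallMorreyNorm d p q h := by
    intro R hεR hR1
    have hR0 : 0 < R := hε0.trans hεR
    have ht : 0 ≤ 1 - (ε / R) ^ ((d : ℝ) - s) := by
      have : (ε / R) ^ ((d : ℝ) - s) ≤ 1 :=
        Real.rpow_le_one (by positivity) ((div_le_one hR0).2 hεR.le) (by linarith)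
      linarith
    refine le_trans ?_ (morrey_le d p q h 0 R hR0 hR1)
    rw [hC, ← morrey_val d p q K _ hp hpq hK ht 0 R hR0, ← hs]
    gcongr
    have e : R ^ ((d : ℝ) - s) * K * (1 - (ε / R) ^ ((d : ℝ) - s)) =
        R ^ ((d : ℝ) - s) * K - ε ^ ((d : ℝ) - s) * K := by
      rw [Real.div_rpow hε0.le hR0.le]
      have : 0 < R ^ ((d : ℝ) - s) := by positivity
      field_simp
    rw [e, ENNReal.ofReal_sub _ (by positivity), ← hI R hR0, ← hI ε hε0, tsub_le_iff_left]
    have hsub : ball (0 : EuclideanSpace ℝ (Fin d)) ε ⊆ ball 0 R := ball_subset_ball hεR.le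
    rw [← lintegral_inter_add_sdiff _ (ball (0 : EuclideanSpace ℝ (Fin d)) R)
      (measurableSet_ball (x := 0) (ε := ε)), Set.inter_eq_right.2 hsub]
    refine add_le_add_right ?_ _
    refine le_trans ?_ (lintegral_mono_set (Set.sdiff_subset (t := ball 0 ε)))
    refine lintegral_mono_ae ?_
    rw [ae_restrict_iff' (measurableSet_ball.diff measurableSet_ball)]
    have hsph : ∀ᵐ x : EuclideanSpace ℝ (Fin d), x ∉ sphere (0 : EuclideanSpace ℝ (Fin d)) ε := by
      rw [← measure_eq_zero_iff_ae_notMem]; exact Measure.addHaar_sphere _ _ _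
    filter_upwards [hsph] with x hx1 hx
    have h1 : ‖x‖ < R := by simpa using hx.1
    have h2 : ε ≤ ‖x‖ := by simpa using hx.2
    have h3 : ‖x‖ ≠ ε := by simpa using hx1
    rw [hh x (lt_of_le_of_ne h2 h3.symm), hfp x (h1.trans hR1)]
  have hhge : ENNReal.ofReal (C * (1 - ε ^ ((d : ℝ) - s)) ^ (1 / p)) ≤
      smallMorreyNorm d p q h := by
    have hcont : ContinuousAt
        (fun R : ℝ => ENNReal.ofReal (C * (1 - (ε / R) ^ ((d : ℝ) - s)) ^ (1 / p))) 1 := by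
      refine ENNReal.continuous_ofReal.continuousAt.comp ?_
      refine continuousAt_const.mul (ContinuousAt.rpow_const ?_ (Or.inr (by positivity)))
      refine continuousAt_const.sub (ContinuousAt.rpow_const ?_ (Or.inr (by linarith)))
      exact continuousAt_const.div continuousAt_id one_ne_zero
    have ht := hcont.tendsto.mono_left (nhdsWithin_le_nhds (s := Set.Iio 1))
    simp only [div_one] at ht
    refine le_of_tendsto ht ?_
    filter_upwards [Ioo_mem_nhdsLT hε1] with R hR
    exact hhR R hR.1 hR.2
  have hgf : ∀ x, |g x| ≤ |f x| := by
    intro x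
    rcases lt_or_ge ‖x‖ ε with hx | hx
    · rw [hg x hx]
    · rw [hg' x hx, abs_zero]; positivity
  have hNf : smallMorreyNorm d p q f = ENNReal.ofReal C :=
    le_antisymm hfle (hgge.trans (morrey_mono d p q hp _ _ (Filter.Eventually.of_forall hgf)))
  have hl1 : ∀ x, ‖x‖ < ε → l x = (1 + δ) * f x := by
    intro x hx; simp only [l]; rw [hg x hx, hh' x hx.le]; ring
  have hl2 : ∀ x, ε < ‖x‖ → l x = (1 - δ) * f x := by
    intro x hx; simp only [l]; rw [hg' x hx.le, hh x hx]; ring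
  have hl3 : ∀ x, ‖x‖ = ε → l x = 0 := by
    intro x hx; simp only [l]; rw [hg' x hx.ge, hh' x hx.le]; ring
  have hNl : smallMorreyNorm d p q l = ENNReal.ofReal ((1 + δ) * C) := by
    rw [ENNReal.ofReal_mul (by linarith)]
    apply le_antisymm
    · rw [← hNf, ← morrey_const d p q hp _ (by linarith)]
      refine morrey_mono d p q hp _ _ (Filter.Eventually.of_forall fun x => ?_)
      have := hf0 x
      rw [abs_of_nonneg (a := (1 + δ) * f x) (by positivity)]
      rcases lt_trichotomy ‖x‖ ε with hx | hx | hx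
      · rw [hl1 x hx, abs_of_nonneg (by positivity)]
      · rw [hl3 x hx, abs_zero]; positivity
      · rw [hl2 x hx, abs_of_nonneg (mul_nonneg (by linarith) this)]; nlinarith
    · refine le_trans (mul_le_mul_right hgge _) ?_
      rw [← morrey_const d p q hp _ (by linarith)]
      refine morrey_mono d p q hp _ _ (Filter.Eventually.of_forall fun x => ?_)
      rcases lt_or_ge ‖x‖ ε with hx | hx
      · rw [hl1 x hx, hg x hx]
      · rw [hg' x hx, mul_zero, abs_zero]; positivity
  have hNd : smallMorreyNorm d p q (fun x => f x - l x) ≤ ENNReal.ofReal (δ * C) := by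
    rw [ENNReal.ofReal_mul hδ0.le, ← hNf, ← morrey_const d p q hp _ hδ0.le]
    refine morrey_mono d p q hp _ _ ?_
    have hsph : ∀ᵐ x : EuclideanSpace ℝ (Fin d), x ∉ sphere (0 : EuclideanSpace ℝ (Fin d)) ε := by
      rw [← measure_eq_zero_iff_ae_notMem]; exact Measure.addHaar_sphere _ _ _
    filter_upwards [hsph] with x hx1
    have h3 : ‖x‖ ≠ ε := by simpa using hx1
    rcases lt_or_gt_of_ne h3 with hx | hx
    · rw [hl1 x hx, ← abs_neg]; apply le_of_eq; congr 1; ring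
    · rw [hl2 x hx]; apply le_of_eq; congr 1; ring
  have hNe : ENNReal.ofReal (2 * δ / ((1 + δ) * C) * (C * (1 - ε ^ ((d : ℝ) - s)) ^ (1 / p))) ≤
      smallMorreyNorm d p q (fun x => f x / C - l x / ((1 + δ) * C)) := by
    rw [ENNReal.ofReal_mul (by positivity)]
    refine le_trans (mul_le_mul_right hhge _) ?_
    rw [← morrey_const d p q hp _ (by positivity)]
    refine morrey_mono d p q hp _ _ (Filter.Eventually.of_forall fun x => ?_)
    rcases le_or_gt ‖x‖ ε with hx | hx
    · rw [hh' x hx, mul_zero, abs_zero]; positivity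
    · rw [hh x hx, hl2 x hx]; apply le_of_eq; congr 1; field_simp; ring
  rw [hNf, hNl, ENNReal.toReal_ofReal hC0.le, ENNReal.toReal_ofReal (by positivity)]
  refine le_trans ?_ (mul_le_mul' (ENNReal.div_le_div_left hNd _) hNe)
  rw [← ENNReal.ofReal_add hC0.le (by positivity), ← ENNReal.ofReal_div_of_pos (by positivity),
    ← ENNReal.ofReal_mul (by positivity)]
  apply le_of_eq
  congr 1
  field_simp
  ring
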